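/- arXiv:1810.06335 — 2 statements merged into one kernel-verified Lean document; each statement's English description precedes it below -/
import Mathlib

section
/- In the independent lognormal futures model, for every initial energy price x > 0 the map x ↦ ∫∫ g(F^E(x,u))·h(F^I(y,v)) dμ(u,v) is differentiable at x, and its derivative (the energy delta Δ_E) is given by the derivative-free Malliavin-weight formula Δ_E = ∫∫ g(F^E(x,u))·h(F^I(y,v)) · u/(x·σ_E·T) dμ(u,v), i.e. the Malliavin weight is π^{Δ_E}(u) = u/(x σ_E T). -/
open MeasureTheory ProbabilityTheory

/-!
Translating a centred Gaussian of variance `T` by `d` multiplies its law by the density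
`exp (u d / T - d² / (2 T))`, whose derivative at `d = 0` is `u / T`: all dependence on the shift
is moved off the payoff, which need not be smooth. Moving the initial price from `x` to `x'` is the
shift `d = log (x' / x) / σ` of the driving noise, so the chain rule turns `u / T` into the weight
`u / (x σ T)`. Noise independent of `u` enters only as a parameter of the payoff, and Fubini
integrates it out beforehand.
-/

open scoped NNReal

section ExponentialWeight

variable {Ω E : Type*} [MeasurableSpace Ω] {P : Measure Ω} [NormedAddCommGroup E] [NormedSpace ℝ E]

lemma abs_le_inv_mul_exp_mul_abs {ε : ℝ} (hε : 0 < ε) (x : ℝ) :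
    |x| ≤ ε⁻¹ * Real.exp (ε * |x|) := by
  simpa [abs_of_pos hε] using rpow_abs_le_mul_exp_abs x zero_le_one hε.ne'

lemma aestronglyMeasurable_of_integrable_exp_mul_abs_smul {X : Ω → ℝ} {F : Ω → E} {ε : ℝ}
    (hX : AEMeasurable X P) (hF : Integrable (fun ω => Real.exp (ε * |X ω|) • F ω) P) :
    AEStronglyMeasurable F P := by
  have hinv : AEStronglyMeasurable (fun ω => Real.exp (-(ε * |X ω|))) P := by fun_prop
  refine (hinv.smul hF.aestronglyMeasurable).congr (.of_forall fun ω => ?_)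
  simp [smul_smul, ← Real.exp_add]

lemma integrable_smul_of_integrable_exp_mul_abs_smul {X : Ω → ℝ} {F : Ω → E} {ε : ℝ} (hε : 0 < ε)
    (hX : AEMeasurable X P) (hF : Integrable (fun ω => Real.exp (ε * |X ω|) • F ω) P) :
    Integrable (fun ω => X ω • F ω) P := by
  refine (hF.norm.const_mul ε⁻¹).mono' (hX.aestronglyMeasurable.smul
    (aestronglyMeasurable_of_integrable_exp_mul_abs_smul hX hF)) (.of_forall fun ω => ?_)
  simp only [norm_smul, Real.norm_eq_abs, Real.abs_exp, ← mul_assoc]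
  gcongr
  exact abs_le_inv_mul_exp_mul_abs hε (X ω)

lemma integrable_of_integrable_exp_mul_abs_smul {X : Ω → ℝ} {F : Ω → E} {ε : ℝ} (hε : 0 ≤ ε)
    (hX : AEMeasurable X P) (hF : Integrable (fun ω => Real.exp (ε * |X ω|) • F ω) P) :
    Integrable F P := by
  refine hF.norm.mono' (aestronglyMeasurable_of_integrable_exp_mul_abs_smul hX hF)
    (.of_forall fun ω => ?_)
  simp only [norm_smul, Real.norm_eq_abs, Real.abs_exp]
  exact le_mul_of_one_le_left (norm_nonneg _) (Real.one_le_exp (by positivity))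

lemma hasDerivAt_integral_exp_mul_smul_zero {X : Ω → ℝ} {F : Ω → E} {ε : ℝ} (hε : 0 < ε)
    (hX : AEMeasurable X P) (hF : Integrable (fun ω => Real.exp (ε * |X ω|) • F ω) P) :
    HasDerivAt (fun t : ℝ => ∫ ω, Real.exp (t * X ω) • F ω ∂P) (∫ ω, X ω • F ω ∂P) 0 := by
  have hε₂ : 0 < ε / 2 := half_pos hε
  have hF_meas := aestronglyMeasurable_of_integrable_exp_mul_abs_smul hX hF
  have hexp_meas (t : ℝ) : AEStronglyMeasurable (fun ω => Real.exp (t * X ω)) P := by fun_prop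
  have hbound (ω : Ω) (t : ℝ) (ht : t ∈ Metric.ball 0 (ε / 2)) :
      ‖(Real.exp (t * X ω) * X ω) • F ω‖ ≤
        (ε / 2)⁻¹ * ‖Real.exp (ε * |X ω|) • F ω‖ := by
    have ht' : |t| ≤ ε / 2 := by simpa using (Metric.mem_ball.1 ht).le
    have htX : t * X ω ≤ ε / 2 * |X ω| := calc
      t * X ω ≤ |t| * |X ω| := (le_abs_self _).trans_eq (abs_mul _ _)
      _ ≤ ε / 2 * |X ω| := by gcongr
    simp only [norm_smul, norm_mul, Real.norm_eq_abs, Real.abs_exp]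
    calc
      Real.exp (t * X ω) * |X ω| * ‖F ω‖
          ≤ Real.exp (ε / 2 * |X ω|) * ((ε / 2)⁻¹ * Real.exp (ε / 2 * |X ω|)) * ‖F ω‖ := by
        gcongr
        exact abs_le_inv_mul_exp_mul_abs hε₂ (X ω)
      _ = (ε / 2)⁻¹ * (Real.exp (ε * |X ω|) * ‖F ω‖) := by
        rw [mul_left_comm, ← Real.exp_add, ← add_mul, add_halves, mul_assoc]
  have hderiv (ω : Ω) (t : ℝ) :
      HasDerivAt (fun s => Real.exp (s * X ω) • F ω) ((Real.exp (t * X ω) * X ω) • F ω) t :=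
    (hasDerivAt_mul_const (X ω)).exp.smul_const (F ω)
  have hmain := (hasDerivAt_integral_of_dominated_loc_of_deriv_le
    (F := fun t ω => Real.exp (t * X ω) • F ω) (Metric.ball_mem_nhds 0 hε₂)
    (.of_forall fun t => (hexp_meas t).smul hF_meas)
    (by simpa using integrable_of_integrable_exp_mul_abs_smul hε.le hX hF)
    (((hexp_meas 0).mul hX.aestronglyMeasurable).smul hF_meas)
    (.of_forall hbound) (hF.norm.const_mul _) (.of_forall fun ω t _ => hderiv ω t)).2
  simpa only [zero_mul, Real.exp_zero, one_mul] using hmain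

end ExponentialWeight

section GaussianShift

variable {E : Type*} [NormedAddCommGroup E] [NormedSpace ℝ E]

lemma gaussianPDFReal_sub (m : ℝ) {v : ℝ≥0} (hv : v ≠ 0) (d u : ℝ) :
    gaussianPDFReal m v (u - d) =
      Real.exp (-(d ^ 2 / (2 * v))) * (gaussianPDFReal m v u * Real.exp (d * ((u - m) / v))) := by
  have hv' : (v : ℝ) ≠ 0 := by exact_mod_cast hv
  have hexp : -(u - d - m) ^ 2 / (2 * v) =
      -(d ^ 2 / (2 * v)) + (-(u - m) ^ 2 / (2 * v) + d * ((u - m) / v)) := by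
    field_simp
    ring
  simp only [gaussianPDFReal, hexp, Real.exp_add]
  ring

lemma integral_comp_add_gaussianReal (m : ℝ) {v : ℝ≥0} (hv : v ≠ 0) (f : ℝ → E) (d : ℝ) :
    ∫ u, f (u + d) ∂gaussianReal m v =
      Real.exp (-(d ^ 2 / (2 * v))) •
        ∫ u, Real.exp (d * ((u - m) / v)) • f u ∂gaussianReal m v := by
  simp only [integral_gaussianReal_eq_integral_smul hv]
  rw [← integral_sub_right_eq_self (fun u => gaussianPDFReal m v u • f (u + d)) d, ← integral_smul]
  simp only [sub_add_cancel, gaussianPDFReal_sub m hv d, smul_smul]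

lemma hasDerivAt_integral_comp_add_gaussianReal {m : ℝ} {v : ℝ≥0} (hv : v ≠ 0) {f : ℝ → E} {ε : ℝ}
    (hε : 0 < ε) (hf : Integrable (fun u => Real.exp (ε * |u - m|) • f u) (gaussianReal m v)) :
    HasDerivAt (fun d => ∫ u, f (u + d) ∂gaussianReal m v)
      (∫ u, ((u - m) / v) • f u ∂gaussianReal m v) 0 := by
  have hv' : 0 < (v : ℝ) := by exact_mod_cast pos_iff_ne_zero.2 hv
  have hf' : Integrable (fun u => Real.exp (ε * v * |(u - m) / v|) • f u) (gaussianReal m v) := by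
    simpa only [abs_div, abs_of_pos hv', mul_assoc, mul_div_cancel₀ _ hv'.ne'] using hf
  have htilt := hasDerivAt_integral_exp_mul_smul_zero (mul_pos hε hv') (by fun_prop) hf'
  have hnorm : HasDerivAt (fun d : ℝ => Real.exp (-(d ^ 2 / (2 * v)))) 0 0 := by
    simpa using (((hasDerivAt_id (0 : ℝ)).pow 2).div_const (2 * (v : ℝ))).neg.exp
  simp only [integral_comp_add_gaussianReal m hv f]
  simpa using hnorm.fun_smul htilt

end GaussianShift

/-- The terminal value `x e^{σ u - c}` of a futures price with initial value `x` and noise `u`. The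
correction `c` is kept free; `c = σ² T / 2` makes the price a martingale. -/
noncomputable def lognormalPrice (σ c x u : ℝ) : ℝ :=
  x * Real.exp (σ * u - c)

namespace lognormalPrice

variable {Ω E : Type*} [MeasurableSpace Ω] [NormedAddCommGroup E]

@[fun_prop]
lemma measurable (σ c x : ℝ) : Measurable (lognormalPrice σ c x) := by
  unfold lognormalPrice
  fun_prop

lemma eq_add_log_div {σ x x' : ℝ} (hσ : σ ≠ 0) (hx : x ≠ 0) (hx' : 0 < x' / x) (c u : ℝ) :
    lognormalPrice σ c x' u = lognormalPrice σ c x (u + Real.log (x' / x) / σ) := by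
  have hexp : σ * (u + Real.log (x' / x) / σ) - c = Real.log (x' / x) + (σ * u - c) := by
    field_simp
    ring
  rw [lognormalPrice, lognormalPrice, hexp, Real.exp_add, Real.exp_log hx', ← mul_assoc,
    mul_div_cancel₀ _ hx]

lemma one_add_abs_le (σ c x u : ℝ) :
    1 + |lognormalPrice σ c x u| ≤ (1 + |x| * Real.exp (-c)) * Real.exp (|σ| * |u|) := by
  have hone : 1 ≤ Real.exp (|σ| * |u|) := Real.one_le_exp (by positivity)
  have hexp : Real.exp (σ * u) ≤ Real.exp (|σ| * |u|) :=
    Real.exp_le_exp.2 ((le_abs_self _).trans_eq (abs_mul σ u))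
  calc
    1 + |lognormalPrice σ c x u| = 1 + |x| * Real.exp (-c) * Real.exp (σ * u) := by
      rw [lognormalPrice, abs_mul, Real.abs_exp, mul_assoc, ← Real.exp_add, neg_add_eq_sub]
    _ ≤ Real.exp (|σ| * |u|) + |x| * Real.exp (-c) * Real.exp (|σ| * |u|) := by gcongr
    _ = (1 + |x| * Real.exp (-c)) * Real.exp (|σ| * |u|) := by ring

lemma integrable_exp_mul_abs_mul_one_add_abs_pow (T : ℝ≥0) (σ c x ε : ℝ) (p : ℕ) :
    Integrable (fun u => Real.exp (ε * |u|) * (1 + |lognormalPrice σ c x u|) ^ p)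
      (gaussianReal 0 T) := by
  have hexp : Integrable (fun u => Real.exp ((ε + p * |σ|) * |u|)) (gaussianReal 0 T) :=
    integrable_exp_mul_abs (integrable_exp_mul_gaussianReal _) (integrable_exp_mul_gaussianReal _)
  refine (hexp.const_mul ((1 + |x| * Real.exp (-c)) ^ p)).mono'
    (Measurable.aestronglyMeasurable (by fun_prop)) (.of_forall fun u => ?_)
  rw [Real.norm_of_nonneg (by positivity)]
  calc
    Real.exp (ε * |u|) * (1 + |lognormalPrice σ c x u|) ^ p
        ≤ Real.exp (ε * |u|) * ((1 + |x| * Real.exp (-c)) * Real.exp (|σ| * |u|)) ^ p := by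
      gcongr
      exact one_add_abs_le σ c x u
    _ = (1 + |x| * Real.exp (-c)) ^ p * Real.exp ((ε + p * |σ|) * |u|) := by
      rw [mul_pow, ← Real.exp_nat_mul, mul_left_comm, ← Real.exp_add]
      ring_nf

lemma integrable_comp (T : ℝ≥0) (σ c x : ℝ) {f : ℝ → E} (hf : StronglyMeasurable f) {C : ℝ} {p : ℕ}
    (hfC : ∀ z, ‖f z‖ ≤ C * (1 + |z|) ^ p) :
    Integrable (fun u => f (lognormalPrice σ c x u)) (gaussianReal 0 T) := by
  have hpow := integrable_exp_mul_abs_mul_one_add_abs_pow T σ c x 0 p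
  simp only [zero_mul, Real.exp_zero, one_mul] at hpow
  exact (hpow.const_mul C).mono' (hf.comp_measurable (measurable σ c x)).aestronglyMeasurable
    (.of_forall fun u => hfC _)

variable [NormedSpace ℝ E]

lemma integrable_exp_mul_abs_smul_comp_prod (T : ℝ≥0) {ν : Measure Ω} [SFinite ν] (σ c x ε : ℝ)
    {f : ℝ → Ω → E} (hf : StronglyMeasurable (Function.uncurry f)) {H : Ω → ℝ}
    (hH : Integrable H ν) {p : ℕ} (hfH : ∀ z ω, ‖f z ω‖ ≤ (1 + |z|) ^ p * H ω) :
    Integrable (fun w : ℝ × Ω => Real.exp (ε * |w.1|) • f (lognormalPrice σ c x w.1) w.2)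
      ((gaussianReal 0 T).prod ν) := by
  have hmeas : StronglyMeasurable fun w : ℝ × Ω => f (lognormalPrice σ c x w.1) w.2 :=
    hf.comp_measurable (by fun_prop : Measurable fun w : ℝ × Ω => (lognormalPrice σ c x w.1, w.2))
  have hexp : StronglyMeasurable fun w : ℝ × Ω => Real.exp (ε * |w.1|) :=
    Measurable.stronglyMeasurable (by fun_prop)
  refine ((integrable_exp_mul_abs_mul_one_add_abs_pow T σ c x ε p).mul_prod hH).mono'
    (hexp.smul hmeas).aestronglyMeasurable (.of_forall fun w => ?_)
  rw [norm_smul, Real.norm_eq_abs, Real.abs_exp, mul_assoc]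
  gcongr
  exact hfH _ _

lemma hasDerivAt_integral_comp {T : ℝ≥0} (hT : T ≠ 0) {σ x ε : ℝ} (hσ : σ ≠ 0) (hx : x ≠ 0)
    (hε : 0 < ε) (c : ℝ) {f : ℝ → E}
    (hf : Integrable (fun u => Real.exp (ε * |u|) • f (lognormalPrice σ c x u))
      (gaussianReal 0 T)) :
    HasDerivAt (fun x' => ∫ u, f (lognormalPrice σ c x' u) ∂gaussianReal 0 T)
      (∫ u, (u / (x * σ * T)) • f (lognormalPrice σ c x u) ∂gaussianReal 0 T) x := by
  have hlog : HasDerivAt (fun x' => Real.log (x' / x) / σ) ((x * σ)⁻¹) x := by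
    convert! (((hasDerivAt_id x).div_const x).log (by simp [hx])).div_const σ using 1
    simp [hx, div_eq_mul_inv, mul_comm]
  have hshift : HasDerivAt (fun d => ∫ u, f (lognormalPrice σ c x (u + d)) ∂gaussianReal 0 T)
      (∫ u, (u / T) • f (lognormalPrice σ c x u) ∂gaussianReal 0 T) (Real.log (x / x) / σ) := by
    simpa [hx] using hasDerivAt_integral_comp_add_gaussianReal (m := 0) hT
      (f := fun u => f (lognormalPrice σ c x u)) hε (by simpa only [sub_zero] using hf)
  have hratio : ∀ᶠ x' in nhds x, 0 < x' / x :=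
    (continuous_id.div_const x).continuousAt.eventually_const_lt (by simp [hx])
  have hreparam : (fun x' => ∫ u, f (lognormalPrice σ c x' u) ∂gaussianReal 0 T) =ᶠ[nhds x]
      fun x' => ∫ u, f (lognormalPrice σ c x (u + Real.log (x' / x) / σ)) ∂gaussianReal 0 T := by
    filter_upwards [hratio] with x' hx'
    simp only [eq_add_log_div hσ hx hx']
  convert! (hshift.scomp x hlog).congr_of_eventuallyEq hreparam using 1
  rw [← integral_smul]
  simp only [smul_smul, div_eq_mul_inv, mul_inv, mul_comm, mul_left_comm]

end lognormalPrice

open lognormalPrice in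
theorem energy_delta_independent_general {Ω E : Type*} [MeasurableSpace Ω] {ν : Measure Ω}
    [SFinite ν] [NormedAddCommGroup E] [NormedSpace ℝ E] {T : ℝ≥0} (hT : T ≠ 0) {σ x : ℝ}
    (hσ : σ ≠ 0) (hx : x ≠ 0) (c : ℝ) {f : ℝ → Ω → E}
    (hf : StronglyMeasurable (Function.uncurry f)) {H : Ω → ℝ} (hH : Integrable H ν) {p : ℕ}
    (hfH : ∀ z ω, ‖f z ω‖ ≤ (1 + |z|) ^ p * H ω) :
    HasDerivAt
      (fun x' => ∫ w : ℝ × Ω, f (lognormalPrice σ c x' w.1) w.2 ∂(gaussianReal 0 T).prod ν)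
      (∫ w : ℝ × Ω, (w.1 / (x * σ * T)) • f (lognormalPrice σ c x w.1) w.2
        ∂(gaussianReal 0 T).prod ν) x := by
  have hint (x' : ℝ) := integrable_exp_mul_abs_smul_comp_prod T σ c x' 1 hf hH hfH
  have hprice (x' : ℝ) := integral_prod _
    (integrable_of_integrable_exp_mul_abs_smul zero_le_one (by fun_prop) (hint x'))
  have hweighted : Integrable
      (fun w : ℝ × Ω => (w.1 / (x * σ * T)) • f (lognormalPrice σ c x w.1) w.2)
      ((gaussianReal 0 T).prod ν) := by
    simpa only [Pi.smul_def, smul_smul, inv_mul_eq_div] using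
      (integrable_smul_of_integrable_exp_mul_abs_smul one_pos (by fun_prop) (hint x)).smul
        (x * σ * T)⁻¹
  simp only [hprice, integral_prod _ hweighted, integral_smul]
  exact hasDerivAt_integral_comp hT hσ hx one_pos c (f := fun z => ∫ ω, f z ω ∂ν)
    (by simpa only [integral_smul] using (hint x).integral_prod_left)

/-- **Energy delta in the independent lognormal futures model.**
For every initial energy price `x > 0`, the quanto option price
`x ↦ ∫∫ g(Fᴱ(x,u)) h(Fᴵ(y,v)) dμ(u,v)` is differentiable at `x` and its derivative is
given by the derivative-free Malliavin-weight formula with weight `π = u / (x σ_E T)`. -/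
theorem energy_delta_independent
    (T σE σI : ℝ) (hT : 0 < T) (hσE : 0 < σE) (hσI : 0 < σI)
    (g h : ℝ → ℝ) (hg : Measurable g) (hh : Measurable h)
    (C : ℝ) (p : ℕ) (hC : 0 ≤ C)
    (hgb : ∀ z : ℝ, |g z| ≤ C * (1 + |z|) ^ p)
    (hhb : ∀ z : ℝ, |h z| ≤ C * (1 + |z|) ^ p)
    (x y : ℝ) (hx : 0 < x) (hy : 0 < y) :
    HasDerivAt
      (fun x' : ℝ =>
        ∫ w : ℝ × ℝ,
          g (x' * Real.exp (σE * w.1 - σE ^ 2 * T / 2)) *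
            h (y * Real.exp (σI * w.2 - σI ^ 2 * T / 2))
          ∂((gaussianReal 0 T.toNNReal).prod (gaussianReal 0 T.toNNReal)))
      (∫ w : ℝ × ℝ,
          g (x * Real.exp (σE * w.1 - σE ^ 2 * T / 2)) *
            h (y * Real.exp (σI * w.2 - σI ^ 2 * T / 2)) *
            (w.1 / (x * σE * T))
        ∂((gaussianReal 0 T.toNNReal).prod (gaussianReal 0 T.toNNReal)))
      x := by
  lift T to ℝ≥0 using hT.le
  have hT' : T ≠ 0 := by exact_mod_cast hT.ne'
  have hI := (lognormalPrice.integrable_comp T σI (σI ^ 2 * T / 2) y hh.stronglyMeasurable hhb).norm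
  have hbound (z v : ℝ) : ‖g z * h (lognormalPrice σI (σI ^ 2 * T / 2) y v)‖ ≤
      (1 + |z|) ^ p * (C * ‖h (lognormalPrice σI (σI ^ 2 * T / 2) y v)‖) := by
    rw [norm_mul, ← mul_assoc, mul_comm _ C]
    gcongr
    exact hgb z
  simp only [Real.toNNReal_coe, mul_comm _ (_ / (x * σE * T))]
  exact energy_delta_independent_general hT' hσE.ne' hx.ne' (σE ^ 2 * T / 2)
    (Measurable.stronglyMeasurable (by fun_prop)) (hI.const_mul C) hbound
end

section
/- In the correlated lognormal futures model, for every initial energy price x > 0 the map x ↦ ∫∫ g(F^E(x,u))·h(F^I(y,u,v)) dμ(u,v) is differentiable at x, and its derivative (the energy delta in the correlated case) equals Δ_E = ∫∫ g(F^E(x,u))·h(F^I(y,u,v)) · (u − ρ·v/√(1−ρ²))/(x·σ_E·T) dμ(u,v), i.e. the Malliavin weight is π^{Δ_E}(u,v) = (u − (ρ/√(1−ρ²))·v)/(x σ_E T). -/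
open MeasureTheory ProbabilityTheory
open scoped ENNReal NNReal

/-!
Tilting `γ_T ⊗ γ_T` by `exp (s (a u + b v))` is the same as translating it by `s (T a, T b)`, and
differentiating an expectation in the tilting parameter gives its covariance with `a u + b v`, so
the payoff itself is never differentiated. Moving the initial price from `x` to `x'` amounts to
shifting `u` by `log (x' / x) / σE`. Shifting `v` by `-ρ / √(1 - ρ²)` times that amount keeps the
other price unchanged, and the linear functional belonging to this direction is the Malliavin
weight.
-/

section ExponentialTilting

variable {Ω Ω' : Type*} {mΩ : MeasurableSpace Ω} {mΩ' : MeasurableSpace Ω'}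
  {μ : Measure Ω} {ν : Measure Ω'}

lemma prod_tilted_tilted [SFinite μ] [SFinite ν] {X : Ω → ℝ} {Y : Ω' → ℝ}
    (hX : Measurable X) (hY : Measurable Y) :
    (μ.tilted X).prod (ν.tilted Y) = (μ.prod ν).tilted fun w ↦ X w.1 + Y w.2 := by
  simp only [Measure.tilted]
  rw [prod_withDensity (by fun_prop) (by fun_prop)]
  congr with w
  simp only [Real.exp_add]
  rw [← ENNReal.ofReal_mul (by positivity), div_mul_div_comm,
    integral_prod_mul (fun ω ↦ Real.exp (X ω)) (fun ω ↦ Real.exp (Y ω))]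

variable {X f : Ω → ℝ} {q r : ℝ≥0∞}

lemma memLp_exp_mul (hX : ∀ t, Integrable (fun ω ↦ Real.exp (t * X ω)) μ) (hq : q ≠ ∞) (t : ℝ) :
    MemLp (fun ω ↦ Real.exp (t * X ω)) q μ := by
  have h_meas := (hX t).aestronglyMeasurable
  rcases eq_or_ne q 0 with rfl | hq₀
  · exact memLp_zero_iff_aestronglyMeasurable.2 h_meas
  · refine (integrable_norm_rpow_iff h_meas hq₀ hq).1
      ((hX (t * q.toReal)).congr (.of_forall fun ω ↦ ?_))
    simp [← Real.exp_mul, mul_right_comm]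

lemma integrable_mul_exp_of_memLp (hX : ∀ t, Integrable (fun ω ↦ Real.exp (t * X ω)) μ)
    (hr : 1 < r) (hf : MemLp f r μ) (t : ℝ) :
    Integrable (fun ω ↦ f ω * Real.exp (t * X ω)) μ := by
  have := ENNReal.HolderConjugate.conjExponent hr.le
  exact hf.integrable_mul <|
    memLp_exp_mul hX (ENNReal.HolderConjugate.lt_top_iff_one_lt r.conjExponent r |>.2 hr).ne t

lemma hasDerivAt_integral_mul_exp (hX : ∀ t, Integrable (fun ω ↦ Real.exp (t * X ω)) μ)
    (hr : 1 < r) (hf : MemLp f r μ) (t : ℝ) :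
    HasDerivAt (fun s ↦ ∫ ω, f ω * Real.exp (s * X ω) ∂μ)
      (∫ ω, f ω * X ω * Real.exp (t * X ω) ∂μ) t := by
  have hX_meas : AEMeasurable X μ := aemeasurable_of_integrable_exp_mul zero_ne_one (hX 0) (hX 1)
  have hf_meas := hf.aestronglyMeasurable
  have hX_abs (s : ℝ) : Integrable (fun ω ↦ Real.exp (s * |X ω|)) μ :=
    integrable_exp_mul_abs (hX s) (hX (-s))
  refine (hasDerivAt_integral_of_dominated_loc_of_deriv_le
    (F := fun s ω ↦ f ω * Real.exp (s * X ω))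
    (F' := fun s ω ↦ f ω * X ω * Real.exp (s * X ω))
    (bound := fun ω ↦ ‖f ω‖ * Real.exp ((|t| + 2) * |X ω|)) (Metric.ball_mem_nhds t one_pos)
    (.of_forall fun s ↦ by fun_prop) (integrable_mul_exp_of_memLp hX hr hf t) (by fun_prop)
    (.of_forall fun ω s hs ↦ ?_) (integrable_mul_exp_of_memLp hX_abs hr hf.norm _)
    (.of_forall fun ω s _ ↦ ?_)).2
  · have hs_le : |s| ≤ |t| + 1 := by
      have : |s - t| < 1 := hs
      linarith [abs_sub_abs_le_abs_sub s t]
    have h_exp : Real.exp (s * X ω) ≤ Real.exp ((|t| + 1) * |X ω|) := by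
      refine Real.exp_le_exp.2 ?_
      exact (le_abs_self (s * X ω)).trans ((abs_mul s (X ω)).trans_le (by gcongr))
    have h_abs : |X ω| ≤ Real.exp |X ω| := by linarith [Real.add_one_le_exp |X ω|]
    calc ‖f ω * X ω * Real.exp (s * X ω)‖
        = ‖f ω‖ * (|X ω| * Real.exp (s * X ω)) := by simp [mul_assoc]
      _ ≤ ‖f ω‖ * (Real.exp |X ω| * Real.exp ((|t| + 1) * |X ω|)) := by gcongr
      _ = ‖f ω‖ * Real.exp ((|t| + 2) * |X ω|) := by
        rw [← Real.exp_add]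
        ring_nf
  · simpa [mul_assoc, mul_comm (X ω)] using
      ((hasDerivAt_mul_const (X ω)).exp.const_mul (f ω) : HasDerivAt _ _ s)

lemma hasDerivAt_integral_tilted_mul [NeZero μ]
    (hX : ∀ t, Integrable (fun ω ↦ Real.exp (t * X ω)) μ) (hr : 1 < r) (hf : MemLp f r μ) (t : ℝ) :
    HasDerivAt (fun s ↦ ∫ ω, f ω ∂μ.tilted (s * X ·))
      (∫ ω, f ω * X ω ∂μ.tilted (t * X ·) -
        (∫ ω, f ω ∂μ.tilted (t * X ·)) * ∫ ω, X ω ∂μ.tilted (t * X ·)) t := by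
  have h_integral (k : Ω → ℝ) (s : ℝ) :
      ∫ ω, k ω ∂μ.tilted (s * X ·) = (∫ ω, k ω * Real.exp (s * X ω) ∂μ) / mgf X μ s := by
    rw [integral_tilted_mul_eq_mgf, ← integral_div]
    exact integral_congr_ae (.of_forall fun ω ↦ by simp only [smul_eq_mul]; ring)
  have h_mgf_ne : mgf X μ t ≠ 0 := (mgf_pos' (NeZero.ne μ) (hX t)).ne'
  have h_mem : t ∈ interior (integrableExpSet X μ) := by
    simp [show integrableExpSet X μ = Set.univ from Set.eq_univ_of_forall hX]
  simp only [h_integral]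
  refine ((hasDerivAt_integral_mul_exp hX hr hf t).div (hasDerivAt_mgf h_mem)
    h_mgf_ne).congr_deriv ?_
  rw [div_mul_div_comm, sub_div, pow_two, mul_div_mul_right _ _ h_mgf_ne]

end ExponentialTilting

section Gaussian

lemma tilted_gaussianReal (m : ℝ) (v : ℝ≥0) (t : ℝ) :
    (gaussianReal m v).tilted (t * ·) = gaussianReal (m + v * t) v := by
  have : IsProbabilityMeasure ((gaussianReal m v).tilted (t * ·)) :=
    isProbabilityMeasure_tilted (integrable_exp_mul_gaussianReal t)
  refine Measure.ext_of_complexMGF_id_eq (funext fun z ↦ ?_)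
  calc complexMGF id ((gaussianReal m v).tilted (t * ·)) z
      = ∫ x, (mgf id (gaussianReal m v) t : ℂ)⁻¹ * Complex.exp ((t + z) * x)
          ∂gaussianReal m v := by
        rw [complexMGF]
        refine (integral_tilted_mul_eq_mgf (X := id) _).trans ?_
        congr with x
        simp only [id_eq, Complex.real_smul, add_mul, Complex.exp_add]
        push_cast
        ring
    _ = complexMGF id (gaussianReal m v) (t + z) / complexMGF id (gaussianReal m v) t := by
        rw [integral_const_mul, complexMGF_ofReal, ← div_eq_inv_mul]
        rfl
    _ = complexMGF id (gaussianReal (m + v * t) v) z := by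
        simp only [complexMGF_id_gaussianReal, ← Complex.exp_sub]
        push_cast
        ring_nf

section Product

variable (v₁ v₂ : ℝ≥0) (a b : ℝ)

lemma integrable_exp_mul_prod_gaussianReal (m₁ m₂ t : ℝ) :
    Integrable (fun w : ℝ × ℝ ↦ Real.exp (t * (a * w.1 + b * w.2)))
      ((gaussianReal m₁ v₁).prod (gaussianReal m₂ v₂)) := by
  simpa only [mul_add, ← mul_assoc, Real.exp_add] using
    (integrable_exp_mul_gaussianReal (t * a)).mul_prod (integrable_exp_mul_gaussianReal (t * b))

lemma tilted_prod_gaussianReal (m₁ m₂ : ℝ) :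
    ((gaussianReal m₁ v₁).prod (gaussianReal m₂ v₂)).tilted (fun w ↦ a * w.1 + b * w.2) =
      ((gaussianReal m₁ v₁).prod (gaussianReal m₂ v₂)).map (· + (v₁ * a, v₂ * b)) := by
  rw [← prod_tilted_tilted (by fun_prop) (by fun_prop), tilted_gaussianReal, tilted_gaussianReal,
    ← gaussianReal_map_add_const, ← gaussianReal_map_add_const,
    Measure.map_prod_map _ _ (by fun_prop) (by fun_prop)]
  rfl

lemma integral_mul_fst_add_mul_snd_prod_gaussianReal :
    ∫ w, (a * w.1 + b * w.2) ∂((gaussianReal 0 v₁).prod (gaussianReal 0 v₂)) = 0 := by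
  have h_int (v : ℝ≥0) : Integrable (fun x : ℝ ↦ x) (gaussianReal 0 v) :=
    memLp_one_iff_integrable.1 (memLp_id_gaussianReal 1)
  have h_fst := ((h_int v₁).comp_fst (gaussianReal 0 v₂)).const_mul a
  have h_snd := ((h_int v₂).comp_snd (gaussianReal 0 v₁)).const_mul b
  rw [integral_add h_fst h_snd, integral_const_mul, integral_const_mul,
    integral_fun_fst (fun x ↦ x), integral_fun_snd (fun x ↦ x)]
  simp

variable {v₁ v₂} in
lemma hasDerivAt_integral_add_smul_prod_gaussianReal {f : ℝ × ℝ → ℝ} {r : ℝ≥0∞} (hr : 1 < r)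
    (hf : MemLp f r ((gaussianReal 0 v₁).prod (gaussianReal 0 v₂))) :
    HasDerivAt
      (fun s : ℝ ↦ ∫ w, f (w + s • (v₁ * a, v₂ * b))
        ∂((gaussianReal 0 v₁).prod (gaussianReal 0 v₂)))
      (∫ w, f w * (a * w.1 + b * w.2) ∂((gaussianReal 0 v₁).prod (gaussianReal 0 v₂))) 0 := by
  have h_tilted (s : ℝ) : ∫ w, f (w + s • (v₁ * a, v₂ * b))
        ∂((gaussianReal 0 v₁).prod (gaussianReal 0 v₂)) =
      ∫ w, f w ∂((gaussianReal 0 v₁).prod (gaussianReal 0 v₂)).tilted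
        (fun w ↦ s * (a * w.1 + b * w.2)) := by
    have h_shift : s • ((v₁ * a, v₂ * b) : ℝ × ℝ) = (v₁ * (s * a), v₂ * (s * b)) := by
      ext <;> simp [mul_left_comm]
    simp only [h_shift, mul_add, ← mul_assoc s]
    rw [tilted_prod_gaussianReal, (measurableEmbedding_addRight _).integral_map]
  simp only [h_tilted]
  simpa [integral_mul_fst_add_mul_snd_prod_gaussianReal] using
    hasDerivAt_integral_tilted_mul (integrable_exp_mul_prod_gaussianReal v₁ v₂ a b 0 0) hr hf 0

end Product

end Gaussian

section Integrability

variable {Ω : Type*} {mΩ : MeasurableSpace Ω} {μ : Measure Ω} {q : ℝ≥0∞}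

lemma memLp_mul_of_memLp_two_mul {f g : Ω → ℝ} (hf : MemLp f (2 * q) μ)
    (hg : MemLp g (2 * q) μ) : MemLp (fun ω ↦ f ω * g ω) q μ := by
  have : ENNReal.HolderTriple (2 * q) (2 * q) q := ⟨by
    rw [ENNReal.mul_inv (by simp) (by simp), ← add_mul, ENNReal.inv_two_add_inv_two, one_mul]⟩
  exact hg.mul' hf

lemma memLp_comp_of_norm_le_pow {E F : Type*} [NormedAddCommGroup E] [NormedAddCommGroup F]
    [IsFiniteMeasure μ] {X : Ω → E} {f : E → F} {C : ℝ} {n : ℕ}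
    (hX : MemLp X (n * q) μ) (hf : ∀ z, ‖f z‖ ≤ C * (1 + ‖z‖) ^ n)
    (hfX : AEStronglyMeasurable (fun ω ↦ f (X ω)) μ) : MemLp (fun ω ↦ f (X ω)) q μ := by
  suffices MemLp (fun ω ↦ (1 + ‖X ω‖) ^ n) q μ from
    (this.const_mul C).of_le hfX (.of_forall fun ω ↦ (hf _).trans (le_abs_self _))
  rcases eq_or_ne n 0 with rfl | hn
  · simpa using memLp_const (1 : ℝ)
  have h_div : n * q / (n : ℝ≥0∞) = q := by
    rw [mul_comm, ENNReal.mul_div_cancel_right (by exact_mod_cast hn) (by simp)]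
  have h_pow := ((memLp_const (1 : ℝ)).add hX.norm).norm_rpow_div n
  simpa [h_div, abs_of_nonneg, add_nonneg] using h_pow

end Integrability

section FuturesPrice

/-- The terminal futures price `F(x, z) = x exp (σ z - σ² T / 2)` in the lognormal model with
volatility `σ` and maturity `T`, as a function of the initial price `x` and the terminal value `z`
of the driving Brownian motion. -/
noncomputable def futuresPrice (σ T x z : ℝ) : ℝ := x * Real.exp (σ * z - σ ^ 2 * T / 2)

lemma futuresPrice_add_log_div {σ x x' : ℝ} (hσ : σ ≠ 0) (hx : 0 < x' / x) (T z : ℝ) :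
    futuresPrice σ T x (z + Real.log (x' / x) / σ) = futuresPrice σ T x' z := by
  have hx₀ : x ≠ 0 := by rintro rfl; simp at hx
  have h_exponent : σ * (z + Real.log (x' / x) / σ) - σ ^ 2 * T / 2 =
      Real.log (x' / x) + (σ * z - σ ^ 2 * T / 2) := by
    field_simp
    ring
  rw [futuresPrice, h_exponent, Real.exp_add, Real.exp_log hx, ← mul_assoc, mul_div_cancel₀ _ hx₀,
    futuresPrice]

variable {Ω : Type*} {mΩ : MeasurableSpace Ω} {μ : Measure Ω} {Z : Ω → ℝ} {q : ℝ≥0∞}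

lemma memLp_futuresPrice (hZ : ∀ t, Integrable (fun ω ↦ Real.exp (t * Z ω)) μ) (hq : q ≠ ∞)
    (σ T x : ℝ) : MemLp (fun ω ↦ futuresPrice σ T x (Z ω)) q μ := by
  convert (memLp_exp_mul hZ hq σ).const_mul (x * Real.exp (-(σ ^ 2 * T / 2))) using 2 with ω
  rw [futuresPrice, mul_assoc, ← Real.exp_add, neg_add_eq_sub]

lemma memLp_comp_futuresPrice [IsFiniteMeasure μ]
    (hZ : ∀ t, Integrable (fun ω ↦ Real.exp (t * Z ω)) μ) (hq : q ≠ ∞)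
    {f : ℝ → ℝ} {C : ℝ} {n : ℕ} (hf : Measurable f) (hf_le : ∀ z, |f z| ≤ C * (1 + |z|) ^ n)
    (σ T x : ℝ) : MemLp (fun ω ↦ f (futuresPrice σ T x (Z ω))) q μ := by
  have h_price := memLp_futuresPrice hZ (ENNReal.mul_ne_top (ENNReal.natCast_ne_top n) hq) σ T x
  exact memLp_comp_of_norm_le_pow h_price hf_le
    (hf.comp_aemeasurable h_price.aemeasurable).aestronglyMeasurable

end FuturesPrice

theorem energy_delta_correlated_general {T σE σI ρ x y : ℝ} (hT : 0 < T) (hσE : σE ≠ 0)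
    (hρ : ρ ∈ Set.Ioo (-1 : ℝ) 1) (hx : x ≠ 0) {φ : ℝ → ℝ → ℝ} {r : ℝ≥0∞} (hr : 1 < r)
    (hφ : MemLp
      (fun w : ℝ × ℝ ↦ φ (futuresPrice σE T x w.1)
        (futuresPrice σI T y (ρ * w.1 + Real.sqrt (1 - ρ ^ 2) * w.2)))
      r ((gaussianReal 0 T.toNNReal).prod (gaussianReal 0 T.toNNReal))) :
    HasDerivAt
      (fun x' ↦ ∫ w : ℝ × ℝ,
        φ (futuresPrice σE T x' w.1)
          (futuresPrice σI T y (ρ * w.1 + Real.sqrt (1 - ρ ^ 2) * w.2))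
        ∂((gaussianReal 0 T.toNNReal).prod (gaussianReal 0 T.toNNReal)))
      (∫ w : ℝ × ℝ,
        φ (futuresPrice σE T x w.1)
            (futuresPrice σI T y (ρ * w.1 + Real.sqrt (1 - ρ ^ 2) * w.2)) *
          ((w.1 - ρ * w.2 / Real.sqrt (1 - ρ ^ 2)) / (x * σE * T))
        ∂((gaussianReal 0 T.toNNReal).prod (gaussianReal 0 T.toNNReal)))
      x := by
  have hκ : Real.sqrt (1 - ρ ^ 2) ≠ 0 := (Real.sqrt_pos.2 (by nlinarith [hρ.1, hρ.2])).ne'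
  set κ := Real.sqrt (1 - ρ ^ 2)
  have h_log : HasDerivAt (fun x' ↦ Real.log (x' / x)) (1 / x) x := by
    simpa [hx] using ((hasDerivAt_id x).div_const x).log (by simp [hx])
  have h_shift := hasDerivAt_integral_add_smul_prod_gaussianReal
    (1 / (σE * T)) (-ρ / (κ * σE * T)) hr hφ
  have h_energy (u s : ℝ) : u + s * (T * (1 / (σE * T))) = u + s / σE := by field_simp
  have h_index (u v s : ℝ) :
      ρ * (u + s / σE) + κ * (v + s * (T * (-ρ / (κ * σE * T)))) = ρ * u + κ * v := by
    field_simp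
    ring
  have h_pos : ∀ᶠ x' in nhds x, 0 < x' / x :=
    (continuous_id.div_const x).continuousAt.eventually (lt_mem_nhds (by simp [hx]))
  refine ((h_shift.comp_of_eq x h_log (by simp [hx])).congr_of_eventuallyEq ?_).congr_deriv ?_
  · filter_upwards [h_pos] with x' hx'
    simp only [Function.comp_apply, Prod.fst_add, Prod.snd_add, Prod.smul_fst, Prod.smul_snd,
      smul_eq_mul, Real.coe_toNNReal T hT.le, h_energy, h_index, futuresPrice_add_log_div hσE hx']
  · rw [← integral_mul_const]
    congr with w
    field_simp
    ring

/-- **Energy delta in the correlated lognormal futures model.**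
With `Fᴱ(x,u) = x·exp(σ_E u − σ_E² T/2)` and
`Fᴵ(y,u,v) = y·exp(σ_I (ρu + √(1−ρ²) v) − σ_I² T/2)` driven by two independent Brownian
motions, for every `x > 0` the quanto price is differentiable in `x` with derivative given
by the Malliavin weight `(u − (ρ/√(1−ρ²)) v) / (x σ_E T)`. -/
theorem energy_delta_correlated
    (T σE σI ρ : ℝ) (hT : 0 < T) (hσE : 0 < σE) (hσI : 0 < σI)
    (hρ : ρ ∈ Set.Ioo (-1 : ℝ) 1)
    (g h : ℝ → ℝ) (hg : Measurable g) (hh : Measurable h)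
    (C : ℝ) (p : ℕ) (hC : 0 ≤ C)
    (hgb : ∀ z : ℝ, |g z| ≤ C * (1 + |z|) ^ p)
    (hhb : ∀ z : ℝ, |h z| ≤ C * (1 + |z|) ^ p)
    (x y : ℝ) (hx : 0 < x) (hy : 0 < y) :
    HasDerivAt
      (fun x' : ℝ =>
        ∫ w : ℝ × ℝ,
          g (x' * Real.exp (σE * w.1 - σE ^ 2 * T / 2)) *
            h (y * Real.exp (σI * (ρ * w.1 + Real.sqrt (1 - ρ ^ 2) * w.2) - σI ^ 2 * T / 2))
          ∂((gaussianReal 0 T.toNNReal).prod (gaussianReal 0 T.toNNReal)))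
      (∫ w : ℝ × ℝ,
          g (x * Real.exp (σE * w.1 - σE ^ 2 * T / 2)) *
            h (y * Real.exp (σI * (ρ * w.1 + Real.sqrt (1 - ρ ^ 2) * w.2) - σI ^ 2 * T / 2)) *
            ((w.1 - ρ * w.2 / Real.sqrt (1 - ρ ^ 2)) / (x * σE * T))
        ∂((gaussianReal 0 T.toNNReal).prod (gaussianReal 0 T.toNNReal)))
      x := by
  have h_exp (a b : ℝ) := integrable_exp_mul_prod_gaussianReal T.toNNReal T.toNNReal a b 0 0
  have h_energy := memLp_comp_futuresPrice (q := 2 * 2) (by simpa using h_exp 1 0) (by finiteness)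
    hg hgb σE T x
  have h_index := memLp_comp_futuresPrice (q := 2 * 2) (h_exp ρ (Real.sqrt (1 - ρ ^ 2)))
    (by finiteness) hh hhb σI T y
  exact energy_delta_correlated_general (φ := fun z z' ↦ g z * h z') hT hσE.ne' hρ hx.ne'
    ENNReal.one_lt_two (memLp_mul_of_memLp_two_mul h_energy h_index)
end
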